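/- arXiv:1705.01171 — 4 statements merged into one kernel-verified Lean document; each statement's English description precedes it below -/
import Mathlib

section
/- Let $d \ge 1$ and let $X \subseteq \mathbb{R}^d$ be a finite nonempty acute set. Then there exists a finite acute set $Y \subseteq \mathbb{R}^{d+2}$ with $|Y| = 2|X|$. (Equivalently, $f(d+2) \ge 2 f(d)$, where $f(d)$ denotes the maximum size of an acute set in $\mathbb{R}^d$.) -/
open RealInnerProductSpace

/-- A finite set of points in a real inner product space is *acute* if any three
distinct points of it form an acute angle. -/
def IsAcuteSet {E : Type*} [NormedAddCommGroup E] [InnerProductSpace ℝ E]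
    (X : Finset E) : Prop :=
  ∀ x ∈ X, ∀ y ∈ X, ∀ z ∈ X, y ≠ x → z ≠ x → y ≠ z → 0 < ⟪y - x, z - x⟫

/-- Append two real coordinates to a vector. -/
noncomputable def appendTwo {d : ℕ} (x : EuclideanSpace ℝ (Fin d)) (a b : ℝ) :
    EuclideanSpace ℝ (Fin (d + 2)) :=
  WithLp.toLp 2 (Fin.snoc (α := fun _ => ℝ) (Fin.snoc (α := fun _ => ℝ) (fun i => x i) a) b)

lemma inner_appendTwo {d : ℕ} (x y z : EuclideanSpace ℝ (Fin d)) (a b a₁ b₁ a₂ b₂ : ℝ) :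
    ⟪appendTwo y a₁ b₁ - appendTwo x a b, appendTwo z a₂ b₂ - appendTwo x a b⟫ =
      ⟪y - x, z - x⟫ + (a₁ - a) * (a₂ - a) + (b₁ - b) * (b₂ - b) := by
  simp only [PiLp.inner_apply, Fin.sum_univ_castSucc, appendTwo]
  simp
  ring

lemma appendTwo_inj {d : ℕ} {x y : EuclideanSpace ℝ (Fin d)} {a b a₁ b₁ : ℝ}
    (h : appendTwo x a b = appendTwo y a₁ b₁) : x = y ∧ a = a₁ ∧ b = b₁ := by
  have h' := congrArg (fun v : EuclideanSpace ℝ (Fin (d + 2)) => (fun i => v i)) h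
  simp only [appendTwo] at h'
  have h1 := Fin.snoc_injective2 h'
  have h2 := Fin.snoc_injective2 h1.1
  refine ⟨?_, h2.2, h1.2⟩
  ext i
  exact congrFun h2.1 i

lemma exists_lower {ι : Type*} [Finite ι] (f : ι → ℝ) :
    ∃ m > 0, ∀ i, 0 < f i → m < f i := by
  have h : ∀ᶠ m in nhdsWithin (0 : ℝ) (Set.Ioi 0), ∀ i, 0 < f i → m < f i := by
    rw [Filter.eventually_all]
    intro i
    by_cases hi : 0 < f i
    · filter_upwards [Ioo_mem_nhdsGT hi] with m hm _
      exact hm.2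
    · exact Filter.Eventually.of_forall fun _ h => absurd h hi
  obtain ⟨m, hm, h0⟩ := (h.and self_mem_nhdsWithin).exists
  exact ⟨m, h0, hm⟩

theorem acute_set_double (d : ℕ) (hd : 1 ≤ d)
    (X : Finset (EuclideanSpace ℝ (Fin d))) (hX : X.Nonempty)
    (hacute : IsAcuteSet X) :
    ∃ Y : Finset (EuclideanSpace ℝ (Fin (d + 2))),
      IsAcuteSet Y ∧ Y.card = 2 * X.card := by
  classical
  obtain ⟨n, hn⟩ : ∃ n, n = X.card := ⟨_, rfl⟩
  let e : Fin n ≃ X := (X.equivFinOfCardEq hn.symm).symm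
  let g : Fin n → EuclideanSpace ℝ (Fin d) := fun i => (e i : EuclideanSpace ℝ (Fin d))
  have hg : Function.Injective g := Subtype.val_injective.comp e.injective
  have hgX : ∀ i, g i ∈ X := fun i => (e i).2
  obtain ⟨m, hm, hmin⟩ := exists_lower
    (fun p : Fin n × Fin n × Fin n => ⟪g p.2.1 - g p.1, g p.2.2 - g p.1⟫)
  have hA : ∀ i j k, j ≠ i → k ≠ i → j ≠ k → m < ⟪g j - g i, g k - g i⟫ := fun i j k h1 h2 h3 =>
    hmin (i, j, k) (hacute _ (hgX i) _ (hgX j) _ (hgX k) (hg.ne h1) (hg.ne h2) (hg.ne h3))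
  obtain ⟨ε, hε, hεm⟩ : ∃ ε : ℝ, 0 < ε ∧ 2 * ε ^ 2 = m :=
    ⟨√(m / 2), by positivity, by rw [Real.sq_sqrt (by positivity)]; ring⟩
  -- pairwise non-parallel unit vectors
  obtain ⟨c, s, hcs, hlt⟩ : ∃ c s : Fin n → ℝ, (∀ i, c i ^ 2 + s i ^ 2 = 1) ∧
      ∀ i j, i ≠ j → |c i * c j + s i * s j| < 1 := by
    let θ : Fin n → ℝ := fun i => 1 / ((i : ℕ) + 1 : ℝ)
    have hθ : ∀ i, 0 < θ i ∧ θ i ≤ 1 := fun i => by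
      refine ⟨by positivity, ?_⟩
      exact (div_le_one (by positivity)).2 (by linarith [Nat.cast_nonneg (α := ℝ) (i : ℕ)])
    refine ⟨fun i => Real.cos (θ i), fun i => Real.sin (θ i),
      fun i => Real.cos_sq_add_sin_sq _, fun i j hij => ?_⟩
    have hne : θ i ≠ θ j := by
      intro h
      apply hij
      have h' : ((i : ℕ) + 1 : ℝ) = (j : ℕ) + 1 := by
        simpa [θ] using h
      exact Fin.ext (by exact_mod_cast add_right_cancel h')
    rw [← Real.cos_sub, ← sq_lt_one_iff_abs_lt_one]
    have hs : Real.sin (θ i - θ j) ≠ 0 := by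
      intro h
      have hp := Real.pi_gt_three
      have := hθ i
      have := hθ j
      rw [Real.sin_eq_zero_iff_of_lt_of_lt (by linarith) (by linarith)] at h
      exact hne (by linarith)
    have := Real.cos_sq_add_sin_sq (θ i - θ j)
    have : 0 < Real.sin (θ i - θ j) ^ 2 := by positivity
    linarith
  let σ : Bool → ℝ := fun b => if b then 1 else -1
  have hσ : ∀ b, σ b = 1 ∨ σ b = -1 := by intro b; cases b <;> simp [σ]
  have hσn : ∀ b b', b ≠ b' → σ b' = - σ b := by
    intro b b' h; cases b <;> cases b' <;> simp_all [σ]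
  let Q : Fin n × Bool → EuclideanSpace ℝ (Fin (d + 2)) :=
    fun p => appendTwo (g p.1) (σ p.2 * ε * c p.1) (σ p.2 * ε * s p.1)
  have hQ : Function.Injective Q := by
    rintro ⟨i, b⟩ ⟨j, b'⟩ h
    obtain ⟨h1, h2, h3⟩ := appendTwo_inj h
    have hij : i = j := hg h1
    subst hij
    by_contra hne
    have hb : b ≠ b' := fun h => hne (by rw [h])
    simp only [hσn b b' hb] at h2 h3
    have h4 : σ b * ε * c i = 0 := by linarith
    have h5 : σ b * ε * s i = 0 := by linarith
    have hs0 : σ b * ε ≠ 0 := mul_ne_zero (by rcases hσ b with h | h <;> rw [h] <;> norm_num) hε.ne'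
    have h6 := (mul_eq_zero.1 h4).resolve_left hs0
    have h7 := (mul_eq_zero.1 h5).resolve_left hs0
    have := hcs i
    rw [h6, h7] at this
    norm_num at this
  refine ⟨Finset.univ.image Q, ?_, ?_⟩
  swap
  · rw [Finset.card_image_of_injective _ hQ]
    simp [hn, mul_comm]
  have hε2 : 0 < ε ^ 2 := by positivity
  intro x hx y hy z hz hyx hzx hyz
  obtain ⟨⟨i, p⟩, -, rfl⟩ := Finset.mem_image.1 hx
  obtain ⟨⟨j, q⟩, -, rfl⟩ := Finset.mem_image.1 hy
  obtain ⟨⟨k, r⟩, -, rfl⟩ := Finset.mem_image.1 hz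
  have hyx := fun h => hyx (congrArg Q h)
  have hzx := fun h => hzx (congrArg Q h)
  have hyz := fun h => hyz (congrArg Q h)
  simp only [Q, inner_appendTwo]
  -- the perturbation, expanded
  have key : (σ q * ε * c j - σ p * ε * c i) * (σ r * ε * c k - σ p * ε * c i) +
      (σ q * ε * s j - σ p * ε * s i) * (σ r * ε * s k - σ p * ε * s i) =
      ε ^ 2 * (σ q * σ r * (c j * c k + s j * s k) - σ q * σ p * (c i * c j + s i * s j)
        - σ p * σ r * (c i * c k + s i * s k) + σ p ^ 2 * (c i ^ 2 + s i ^ 2)) := by ring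
  rw [add_assoc, key, hcs i]
  have hsg : ∀ b b' : Bool, ∀ w : ℝ, |w| < 1 → -1 < σ b * σ b' * w ∧ σ b * σ b' * w < 1 := by
    intro b b' w hw
    have := abs_lt.1 hw
    rcases hσ b with h | h <;> rcases hσ b' with h' | h' <;> rw [h, h'] <;>
      constructor <;> linarith
  have hs2 : ∀ b, σ b ^ 2 = 1 := by
    intro b; rcases hσ b with h | h <;> rw [h] <;> norm_num
  by_cases hji : j = i
  · subst hji
    have hqp : p ≠ q := fun h => hyx (by rw [h])
    have hkj : k ≠ j := by
      rintro rfl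
      have hrp : p ≠ r := fun h => hzx (by rw [h])
      exact hyz (by cases p <;> cases q <;> cases r <;> simp_all)
    have h1 := hsg p r _ (hlt j k hkj.symm)
    rw [sub_self, inner_zero_left, zero_add, hσn p q hqp]
    apply mul_pos hε2
    have := hcs j
    have := hs2 p
    nlinarith
  by_cases hki : k = i
  · subst hki
    have hrp : p ≠ r := fun h => hzx (by rw [h])
    have h1 := hsg p q _ (hlt k j (Ne.symm hji))
    rw [sub_self, inner_zero_right, zero_add, hσn p r hrp]
    apply mul_pos hε2
    have := hcs k
    have := hs2 p
    nlinarith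
  by_cases hjk : j = k
  · subst hjk
    have hqr : q ≠ r := fun h => hyz (by rw [h])
    have h0 : 0 < ⟪g j - g i, g j - g i⟫ :=
      real_inner_self_pos.2 (sub_ne_zero.2 (hg.ne hji))
    have e1 : σ q * -σ q * (c j * c j + s j * s j) - σ q * σ p * (c i * c j + s i * s j)
        - σ p * -σ q * (c i * c j + s i * s j) + σ p ^ 2 * 1 = 0 := by
      linear_combination -(σ q ^ 2) * hcs j + hs2 p - hs2 q
    rw [hσn q r hqr, e1]
    linarith
  · have h0 := hA i j k hji hki hjk
    have h1 := hsg q r _ (hlt j k hjk)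
    have h2 := hsg q p _ (hlt i j (Ne.symm hji))
    have h3 := hsg p r _ (hlt i k (Ne.symm hki))
    rw [hs2 p]
    nlinarith
end

section
/- For every $k \ge 0$ and $d \ge 1$: if there exists a finite acute set of cardinality $n \ge 1$ in $\mathbb{R}^d$, then there exists a finite acute set of cardinality $2^k n$ in $\mathbb{R}^{d+2k}$. -/
open RealInnerProductSpace

/-- Append two coordinates. -/
noncomputable def ap {d : ℕ} (x : EuclideanSpace ℝ (Fin d)) (a b : ℝ) :
    EuclideanSpace ℝ (Fin (d + 2)) :=
  WithLp.toLp 2 (Fin.append (fun i => x i) ![a, b])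

lemma ap_inner {d : ℕ} (x y z : EuclideanSpace ℝ (Fin d)) (a b c e f g : ℝ) :
    ⟪ap y c e - ap x a b, ap z f g - ap x a b⟫ =
      ⟪y - x, z - x⟫ + ((c - a) * (f - a) + (e - b) * (g - b)) := by
  simp only [PiLp.inner_apply, Fin.sum_univ_add, ap, PiLp.sub_apply, Fin.append_left,
    Fin.append_right, Fin.sum_univ_two]
  simp
  ring

lemma ap_inj {d : ℕ} {x y : EuclideanSpace ℝ (Fin d)} {a b c e : ℝ}
    (h : ap x a b = ap y c e) : x = y ∧ a = c := by
  constructor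
  · ext i
    have := congrArg (fun v => v (Fin.castAdd 2 i)) h
    simpa [ap] using this
  · have := congrArg (fun v => v (Fin.natAdd d 0)) h
    simp only [ap, Fin.append_right] at this
    exact this

lemma cos_bound (m k : ℝ) (h : m ≠ k) :
    |Real.cos (Real.arctan m) * Real.cos (Real.arctan k)
      + Real.sin (Real.arctan m) * Real.sin (Real.arctan k)| < 1 := by
  rw [← Real.cos_sub, ← sq_lt_one_iff_abs_lt_one]
  have h1 : Real.sin (Real.arctan m - Real.arctan k) ≠ 0 := by
    intro h0
    have := Real.arctan_lt_pi_div_two m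
    have := Real.arctan_lt_pi_div_two k
    have := Real.neg_pi_div_two_lt_arctan m
    have := Real.neg_pi_div_two_lt_arctan k
    rw [Real.sin_eq_zero_iff_of_lt_of_lt (by linarith) (by linarith)] at h0
    exact h (Real.arctan_injective (by linarith))
  have h2 := Real.sin_sq_add_cos_sq (Real.arctan m - Real.arctan k)
  have : 0 < Real.sin (Real.arctan m - Real.arctan k) ^ 2 := by positivity
  linarith

lemma two_bound (p q r s t u : ℝ) (h1 : p ^ 2 + q ^ 2 = 1) (h2 : r ^ 2 + s ^ 2 = 1)
    (h3 : t ^ 2 + u ^ 2 = 1) : -4 ≤ (r - p) * (t - p) + (s - q) * (u - q) := by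
  nlinarith [sq_nonneg (r + t), sq_nonneg (s + u), sq_nonneg (r - p + t - p),
    sq_nonneg (s - q + u - q), sq_nonneg (r - p), sq_nonneg (r + p), sq_nonneg (t + p),
    sq_nonneg (s + q), sq_nonneg (u + q), sq_nonneg (r - t), sq_nonneg (s - u)]

lemma acute_step (d : ℕ) (X : Finset (EuclideanSpace ℝ (Fin d))) (hX : IsAcuteSet X) :
    ∃ Y : Finset (EuclideanSpace ℝ (Fin (d + 2))), IsAcuteSet Y ∧ Y.card = 2 * X.card := by
  classical
  obtain ⟨g, hg⟩ : ∃ g : EuclideanSpace ℝ (Fin d) → ℝ, Set.InjOn g X := by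
    obtain ⟨f, hf⟩ := Set.countable_iff_exists_injOn.1 X.countable_toSet
    exact ⟨fun x => (f x : ℝ), fun x hx y hy h => hf hx hy (Nat.cast_injective (R := ℝ) h)⟩
  have hpos : ∀ x ∈ X, ∀ y ∈ X, ∀ z ∈ X, y ≠ x → z ≠ x → 0 < ⟪y - x, z - x⟫ := by
    intro x hx y hy z hz hyx hzx
    by_cases hyz : y = z
    · subst hyz
      exact real_inner_self_pos.2 (sub_ne_zero.2 hyx)
    · exact hX x hx y hy z hz hyx hzx hyz
  obtain ⟨ε, hε, hε0⟩ : ∃ ε : ℝ, (∀ x ∈ X, ∀ y ∈ X, ∀ z ∈ X, y ≠ x → z ≠ x →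
      4 * ε ^ 2 < ⟪y - x, z - x⟫) ∧ 0 < ε := by
    have : ∀ᶠ ε : ℝ in nhdsWithin 0 (Set.Ioi 0), (∀ x ∈ X, ∀ y ∈ X, ∀ z ∈ X, y ≠ x → z ≠ x →
      4 * ε ^ 2 < ⟪y - x, z - x⟫) := by
      apply eventually_nhdsWithin_of_eventually_nhds
      simp only [Filter.eventually_all_finset]
      intro x hx y hy z hz
      by_cases h1 : y ≠ x
      · by_cases h2 : z ≠ x
        · have hc : Continuous (fun ε : ℝ => 4 * ε ^ 2) := by fun_prop
          have := (hc.tendsto 0).eventually_lt_const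
            (by simpa using hpos x hx y hy z hz h1 h2)
          filter_upwards [this] with ε h _ _ using h
        · simp [h2]
      · simp [h1]
    exact (this.and self_mem_nhdsWithin).exists
  let P : EuclideanSpace ℝ (Fin d) × ℝ → EuclideanSpace ℝ (Fin (d + 2)) := fun p =>
    ap p.1 (ε * (p.2 * Real.cos (Real.arctan (g p.1))))
      (ε * (p.2 * Real.sin (Real.arctan (g p.1))))
  have hP : ∀ p q, P p = P q → p = q := by
    rintro ⟨x, s⟩ ⟨y, t⟩ h
    obtain ⟨h1, h2⟩ := ap_inj h
    dsimp only at h1 h2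
    subst h1
    have := (Real.cos_arctan_pos (g x)).ne'
    have h3 := mul_right_cancel₀ this (mul_left_cancel₀ hε0.ne' h2)
    rw [h3]
  refine ⟨(X ×ˢ ({1, -1} : Finset ℝ)).image P, ?_, ?_⟩
  swap
  · rw [Finset.card_image_of_injective _ (fun p q => hP p q), Finset.card_product,
      Finset.card_pair (by norm_num), mul_comm]
  have sq1 : ∀ s ∈ ({1, -1} : Finset ℝ), s ^ 2 = 1 := by
    intro s hs
    simp only [Finset.mem_insert, Finset.mem_singleton] at hs
    rcases hs with rfl | rfl <;> norm_num
  have opp : ∀ s ∈ ({1, -1} : Finset ℝ), ∀ t ∈ ({1, -1} : Finset ℝ), s ≠ t → t = -s := by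
    intro s hs t ht h
    simp only [Finset.mem_insert, Finset.mem_singleton] at hs ht
    rcases hs with rfl | rfl <;> rcases ht with rfl | rfl <;> simp_all
  -- the key estimate for an antipodal pair
  have key : ∀ x ∈ X, ∀ z ∈ X, z ≠ x → ∀ s ∈ ({1, -1} : Finset ℝ), ∀ t ∈ ({1, -1} : Finset ℝ),
      0 < ⟪P (x, -s) - P (x, s), P (z, t) - P (x, s)⟫ := by
    intro x hx z hz hzx s hs t ht
    have hb := cos_bound (g z) (g x) (fun h => hzx (hg hz hx h))
    have hs2 := sq1 s hs
    have hst : s * t = 1 ∨ s * t = -1 := by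
      have : (s * t) ^ 2 = 1 := by rw [mul_pow, hs2, sq1 t ht, one_mul]
      exact by simpa using this
    simp only [P]
    rw [ap_inner, sub_self, inner_zero_left, zero_add]
    have hx1 := Real.sin_sq_add_cos_sq (Real.arctan (g x))
    generalize Real.cos (Real.arctan (g x)) = p at *
    generalize Real.sin (Real.arctan (g x)) = q at *
    generalize Real.cos (Real.arctan (g z)) = r at *
    generalize Real.sin (Real.arctan (g z)) = w at *
    have e : (ε * (-s * p) - ε * (s * p)) * (ε * (t * r) - ε * (s * p)) +
        (ε * (-s * q) - ε * (s * q)) * (ε * (t * w) - ε * (s * q))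
        = 2 * ε ^ 2 * (s ^ 2 * (q ^ 2 + p ^ 2) - (s * t) * (r * p + w * q)) := by ring
    rw [e, hs2, hx1]
    rw [abs_lt] at hb
    have : 0 < 1 * 1 - (s * t) * (r * p + w * q) := by
      rcases hst with h | h <;> rw [h] <;> linarith
    positivity
  intro a ha b hb c hc hba hca hbc
  simp only [Finset.mem_image, Finset.mem_product, Prod.exists] at ha hb hc
  obtain ⟨x, s, ⟨hx, hs⟩, rfl⟩ := ha
  obtain ⟨y, t, ⟨hy, ht⟩, rfl⟩ := hb
  obtain ⟨z, u, ⟨hz, hu⟩, rfl⟩ := hc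
  by_cases hyx : y = x
  · subst hyx
    have := opp s hs t ht (fun h => hba (by rw [h]))
    subst this
    by_cases hzy : z = y
    · subst hzy
      have := opp s hs u hu (fun h => hca (by rw [h]))
      subst this
      exact absurd rfl hbc
    · exact key y hy z hz hzy s hs u hu
  · by_cases hzx : z = x
    · subst hzx
      have := opp s hs u hu (fun h => hca (by rw [h]))
      subst this
      rw [real_inner_comm]
      exact key z hz y hy hyx s hs t ht
    · have h1 := hε x hx y hy z hz hyx hzx
      simp only [P]
      rw [ap_inner]
      have unit : ∀ s ∈ ({1, -1} : Finset ℝ), ∀ x : EuclideanSpace ℝ (Fin d),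
          (s * Real.cos (Real.arctan (g x))) ^ 2 + (s * Real.sin (Real.arctan (g x))) ^ 2 = 1 := by
        intro s hs x
        rw [mul_pow, mul_pow, sq1 s hs, one_mul, one_mul, Real.cos_sq_add_sin_sq]
      have h2 := two_bound _ _ _ _ _ _ (unit s hs x) (unit t ht y) (unit u hu z)
      have h3 := mul_le_mul_of_nonneg_left h2 (sq_nonneg ε)
      linarith

theorem acute_set_iterate (k d n : ℕ) (hd : 1 ≤ d) (hn : 1 ≤ n)
    (h : ∃ X : Finset (EuclideanSpace ℝ (Fin d)), IsAcuteSet X ∧ X.card = n) :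
    ∃ Y : Finset (EuclideanSpace ℝ (Fin (d + 2 * k))),
      IsAcuteSet Y ∧ Y.card = 2 ^ k * n := by
  induction k with
  | zero => simpa using h
  | succ k ih =>
    obtain ⟨X, hX, hc⟩ := ih
    obtain ⟨Y, hY, hc'⟩ := acute_step _ X hX
    refine ⟨Y, hY, ?_⟩
    rw [hc', hc]
    ring
end

section
/- For every integer $d \ge 4$ there exists a finite acute set $S \subseteq \mathbb{R}^d$ with $(|S| : \mathbb{R}) \ge 2^{d/2 + 1}$ (where the exponent $d/2 + 1$ is a real number). -/
open RealInnerProductSpace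

open Filter Topology

/-- A configuration of `n` points in `ℝ^d` (in coordinates) that is acute. -/
def HasAcute (n d : ℕ) : Prop :=
  ∃ (ι : Type) (_ : Fintype ι), Fintype.card ι = n ∧ ∃ f : ι → Fin d → ℝ,
    Function.Injective f ∧ ∀ i j k, j ≠ i → k ≠ i → j ≠ k →
      0 < ∑ t, (f j t - f i t) * (f k t - f i t)

lemma exists_dirs (ι : Type) [Fintype ι] :
    ∃ a b : ι → ℝ, (∀ i, 0 < a i) ∧ (∀ i, a i ^ 2 + b i ^ 2 = 1) ∧
      ∀ i j, i ≠ j → |a i * a j + b i * b j| < 1 := by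
  let e := Fintype.equivFin ι
  let a : ι → ℝ := fun i => 1 / ((e i : ℕ) + 2 : ℝ)
  have ha : ∀ i, 0 < a i := fun i => by positivity
  have ha1 : ∀ i, a i ≤ 1 := fun i => by
    have : (0 : ℝ) ≤ ((e i : ℕ) : ℝ) := Nat.cast_nonneg _
    exact (div_le_one (by positivity)).2 (by linarith)
  have hinj : ∀ i j, i ≠ j → a i ≠ a j := by
    intro i j hij h
    apply hij
    apply e.injective
    apply Fin.ext
    simpa [a] using h
  have hs : ∀ i, a i ^ 2 + √(1 - a i ^ 2) ^ 2 = 1 := fun i => by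
    rw [Real.sq_sqrt (by nlinarith [ha i, ha1 i])]; ring
  refine ⟨a, fun i => √(1 - a i ^ 2), ha, hs, ?_⟩
  intro i j hij
  have h1 := hs i
  have h2 := hs j
  have hb1 := Real.sqrt_nonneg (1 - a i ^ 2)
  have hb2 := Real.sqrt_nonneg (1 - a j ^ 2)
  have hd : 0 < (a i - a j) ^ 2 := by
    have := sub_ne_zero.2 (hinj i j hij)
    positivity
  have hp := mul_pos (ha i) (ha j)
  have hq := mul_nonneg hb1 hb2
  rw [abs_lt]
  constructor
  · linarith
  · nlinarith [sq_nonneg (√(1 - a i ^ 2) - √(1 - a j ^ 2))]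

/-- Sign of a boolean. -/
def sgnB (s : Bool) : ℝ := if s then 1 else -1

lemma sgnB_ne {s t : Bool} (h : s ≠ t) : sgnB t = - sgnB s := by
  cases s <;> cases t <;> simp_all [sgnB]

lemma sgnB_sq (s : Bool) : sgnB s * sgnB s = 1 := by
  cases s <;> simp [sgnB]

lemma sgnB_inj {s t : Bool} (h : sgnB s = sgnB t) : s = t := by
  revert h
  cases s <;> cases t <;> norm_num [sgnB]

lemma HasAcute.step {n d : ℕ} (h : HasAcute n d) : HasAcute (n * 2) (d + 2) := by
  obtain ⟨ι, _, hc, f, hf, hacute⟩ := h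
  obtain ⟨a, b, ha, hab, hlt⟩ := exists_dirs ι
  let g : ℝ → ι × Bool → Fin (d + 2) → ℝ := fun ε p =>
    Fin.cons (ε * (sgnB p.2 * a p.1)) (Fin.cons (ε * (sgnB p.2 * b p.1)) (f p.1))
  have hsum : ∀ ε p q r, ∑ t, (g ε q t - g ε p t) * (g ε r t - g ε p t) =
      ε ^ 2 * ((sgnB q.2 * a q.1 - sgnB p.2 * a p.1) * (sgnB r.2 * a r.1 - sgnB p.2 * a p.1)
       + (sgnB q.2 * b q.1 - sgnB p.2 * b p.1) * (sgnB r.2 * b r.1 - sgnB p.2 * b p.1))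
      + ∑ t, (f q.1 t - f p.1 t) * (f r.1 t - f p.1 t) := by
    intro ε p q r
    simp only [g, Fin.sum_univ_succ, Fin.cons_zero, Fin.cons_succ]
    ring
  -- the triples for which the base configuration already gives a positive value
  have hbase : ∀ i j k, j ≠ i → k ≠ i → 0 < ∑ t, (f j t - f i t) * (f k t - f i t) := by
    intro i j k hj hk
    by_cases hjk : j = k
    · subst hjk
      obtain ⟨t, ht⟩ := Function.ne_iff.1 (hf.ne hj)
      refine Finset.sum_pos' (fun t _ => mul_self_nonneg _) ⟨t, Finset.mem_univ _, ?_⟩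
      exact mul_self_pos.2 (sub_ne_zero.2 ht)
    · exact hacute i j k hj hk hjk
  have hev : ∀ᶠ ε in 𝓝 (0 : ℝ), ∀ p q r : ι × Bool, q.1 ≠ p.1 → r.1 ≠ p.1 →
      0 < ∑ t, (g ε q t - g ε p t) * (g ε r t - g ε p t) := by
    simp only [eventually_all]
    intro p q r hq hr
    simp only [hsum]
    refine ContinuousAt.eventually_lt (f := fun _ : ℝ => (0 : ℝ)) continuousAt_const ?_ ?_
    · fun_prop
    · simpa using hbase _ _ _ hq hr
  obtain ⟨ε, hε, hpos⟩ :=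
    ((hev.filter_mono nhdsWithin_le_nhds).and (self_mem_nhdsWithin (s := Set.Ioi (0 : ℝ)))).exists
  have hpos : 0 < ε := hpos
  have key : ∀ (i : ι) (s t : Bool) (k : ι) (u : Bool), s ≠ t → k ≠ i →
      0 < ε ^ 2 * ((sgnB t * a i - sgnB s * a i) * (sgnB u * a k - sgnB s * a i)
       + (sgnB t * b i - sgnB s * b i) * (sgnB u * b k - sgnB s * b i)) := by
    intro i s t k u hst hk
    refine mul_pos (by positivity) ?_
    rw [sgnB_ne hst]
    have h1 := abs_lt.1 (hlt i k hk.symm)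
    have h2 := hab i
    cases s <;> cases u <;> simp only [sgnB] <;> simp <;> nlinarith
  refine ⟨ι × Bool, inferInstance, by simp [hc], g ε, ?_, ?_⟩
  · rintro ⟨i, s⟩ ⟨j, t⟩ h
    have h1 := Fin.cons_inj.1 h
    have h2 := Fin.cons_inj.1 h1.2
    have hij : i = j := hf h2.2
    subst hij
    have h3 := mul_right_cancel₀ (ha i).ne' (mul_left_cancel₀ hpos.ne' h1.1)
    exact Prod.ext rfl (sgnB_inj h3)
  · rintro ⟨i, s⟩ ⟨j, t⟩ ⟨k, u⟩ hj hk hjk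
    by_cases hji : j = i
    · subst hji
      have hst : s ≠ t := fun h => hj (by rw [h])
      have hkj : k ≠ j := by
        rintro rfl
        have hsu : s ≠ u := fun h => hk (by rw [h])
        have htu : t ≠ u := fun h => hjk (by rw [h])
        revert hst hsu htu
        cases s <;> cases t <;> cases u <;> simp
      rw [hsum]
      simpa using key j s t k u hst hkj
    · by_cases hki : k = i
      · subst hki
        have hsu : s ≠ u := fun h => hk (by rw [h])
        rw [hsum]
        have := key k s u j t hsu hji
        simp only [sub_self, mul_zero, Finset.sum_const_zero, add_zero]
        linarith
      · exact hε _ _ _ hji hki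

/-- Eight acute points in dimension four. -/
def pts4 : Fin 8 → Fin 4 → ℤ :=
  ![![6, 25, 27, 6], ![31, 22, -3, -4], ![3, 4, 30, -7], ![27, -2, 23, 14], ![21, 28, 21, -23],
    ![0, 4, 1, -11], ![30, -2, 1, -9], ![4, 18, -2, 9]]

/-- Twelve acute points in dimension five. -/
def pts5 : Fin 12 → Fin 5 → ℤ :=
  ![![21, 3, 19, 3, 1], ![7, 22, 7, 14, 5], ![22, 19, 5, 4, -10], ![22, 5, 11, 19, 2],
    ![21, 20, 23, 4, 8], ![5, 5, 11, 18, 2], ![8, 12, 4, -3, -7], ![15, 7, 4, -2, 8],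
    ![21, 16, 0, 11, 6], ![7, 8, 20, 6, -7], ![14, 23, 19, 11, -6], ![7, 18, 15, 1, 13]]

lemma hasAcute_of_int {n d : ℕ} (f : Fin n → Fin d → ℤ) (hf : ∀ i j, f i = f j → i = j)
    (h : ∀ i j k, j ≠ i → k ≠ i → j ≠ k → 0 < ∑ t, (f j t - f i t) * (f k t - f i t)) :
    HasAcute n d := by
  refine ⟨Fin n, inferInstance, by simp, fun i t => (f i t : ℝ), ?_, ?_⟩
  · intro i j hij
    apply hf
    funext t
    have := congrFun hij t
    dsimp only at this
    exact_mod_cast this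
  · intro i j k h1 h2 h3
    dsimp only
    exact_mod_cast h i j k h1 h2 h3

lemma hasAcute_four : HasAcute 8 4 := by
  refine hasAcute_of_int pts4 ?_ ?_
  · decide +kernel
  · decide +kernel

lemma hasAcute_five : HasAcute 12 5 := by
  refine hasAcute_of_int pts5 ?_ ?_
  · decide +kernel
  · decide +kernel

lemma HasAcute.iter {n d : ℕ} (h : HasAcute n d) (m : ℕ) : HasAcute (n * 2 ^ m) (d + 2 * m) := by
  induction m with
  | zero => simpa using h
  | succ m ih =>
    have := ih.step
    rwa [mul_assoc, ← pow_succ] at this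

lemma HasAcute.finset {n d : ℕ} (h : HasAcute n d) :
    ∃ S : Finset (EuclideanSpace ℝ (Fin d)), IsAcuteSet S ∧ S.card = n := by
  obtain ⟨ι, _, hc, f, hf, hacute⟩ := h
  have hinj : Function.Injective (fun i => WithLp.toLp 2 (f i) : ι → EuclideanSpace ℝ (Fin d)) :=
    (WithLp.toLp_injective 2).comp hf
  refine ⟨Finset.univ.map ⟨_, hinj⟩, ?_, by simp [hc]⟩
  intro x hx y hy z hz hyx hzx hyz
  simp only [Finset.mem_map, Finset.mem_univ, true_and, Function.Embedding.coeFn_mk] at hx hy hz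
  obtain ⟨i, rfl⟩ := hx
  obtain ⟨j, rfl⟩ := hy
  obtain ⟨k, rfl⟩ := hz
  have := hacute i j k (fun h => hyx (by rw [h])) (fun h => hzx (by rw [h]))
    (fun h => hyz (by rw [h]))
  rw [PiLp.inner_apply]
  refine this.trans_eq (Finset.sum_congr rfl fun t _ => ?_)
  simp [mul_comm]

theorem acute_set_exponential (d : ℕ) (hd : 4 ≤ d) :
    ∃ S : Finset (EuclideanSpace ℝ (Fin d)),
      IsAcuteSet S ∧ (S.card : ℝ) ≥ (2 : ℝ) ^ ((d : ℝ) / 2 + 1) := by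
  rcases Nat.even_or_odd' (d - 4) with ⟨m, hm | hm⟩
  · obtain rfl : d = 4 + 2 * m := by omega
    obtain ⟨S, hS, hc⟩ := (hasAcute_four.iter m).finset
    refine ⟨S, hS, ?_⟩
    rw [hc]
    have : (((4 + 2 * m : ℕ) : ℝ) / 2 + 1) = ((3 + m : ℕ) : ℝ) := by push_cast; ring
    rw [this, Real.rpow_natCast, pow_add]
    push_cast
    norm_num
  · obtain rfl : d = 5 + 2 * m := by omega
    obtain ⟨S, hS, hc⟩ := (hasAcute_five.iter m).finset
    refine ⟨S, hS, ?_⟩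
    rw [hc]
    have : (((5 + 2 * m : ℕ) : ℝ) / 2 + 1) = ((3 + m : ℕ) : ℝ) + 1 / 2 := by push_cast; ring
    rw [this, Real.rpow_add (by norm_num), Real.rpow_natCast, pow_add, ← Real.sqrt_eq_rpow]
    push_cast
    have h2 : √(2 : ℝ) ≤ 3 / 2 := by
      rw [Real.sqrt_le_left (by norm_num)]; norm_num
    have h3 : (0 : ℝ) < 2 ^ m := by positivity
    nlinarith
end

section
/- Let $d \ge 1$ and let $X \subseteq \mathbb{R}^d$ be a finite acute set. Suppose $s > 0$ is such that $\langle y - x, z - x \rangle \ge s$ for all $x, y, z \in X$ with $y \ne x$ and $z \ne x$, and let $r > 0$ satisfy $4r^2 < s$. Let $\phi : X \to \mathbb{R}^2$ be a map with $\lVert \phi(x) \rVert = r$ for all $x \in X$, and such that the $2|X|$ points $\pm\phi(x)$, $x \in X$, are pairwise distinct (i.e. for all $x, y \in X$, $\phi(x) = \phi(y)$ implies $x = y$, and $\phi(x) \ne -\phi(y)$ for all $x, y \in X$). Then the set $Y := \{(x, \varepsilon \phi(x)) : x \in X, \varepsilon \in \{+1, -1\}\} \subseteq \mathbb{R}^{d+2}$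 is an acute set. -/
open RealInnerProductSpace
open scoped Classical

theorem doubled_set_is_acute (d : ℕ) (hd : 1 ≤ d)
    (X : Finset (EuclideanSpace ℝ (Fin d))) (hacute : IsAcuteSet X)
    (s r : ℝ) (hs : 0 < s)
    (hlow : ∀ x ∈ X, ∀ y ∈ X, ∀ z ∈ X, y ≠ x → z ≠ x → s ≤ ⟪y - x, z - x⟫)
    (hr : 0 < r) (hrs : 4 * r ^ 2 < s)
    (φ : EuclideanSpace ℝ (Fin d) → EuclideanSpace ℝ (Fin 2))
    (hnorm : ∀ x ∈ X, ‖φ x‖ = r)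
    (hinj : ∀ x ∈ X, ∀ y ∈ X, φ x = φ y → x = y)
    (hneg : ∀ x ∈ X, ∀ y ∈ X, φ x ≠ -φ y) :
    IsAcuteSet
      ((X.image fun x =>
          (WithLp.equiv 2 (EuclideanSpace ℝ (Fin d) × EuclideanSpace ℝ (Fin 2))).symm
            (x, φ x)) ∪
        (X.image fun x =>
          (WithLp.equiv 2 (EuclideanSpace ℝ (Fin d) × EuclideanSpace ℝ (Fin 2))).symm
            (x, -φ x))) := by
  have key : ∀ p, p ∈ ((X.image fun x =>
          (WithLp.equiv 2 (EuclideanSpace ℝ (Fin d) × EuclideanSpace ℝ (Fin 2))).symm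
            (x, φ x)) ∪
        (X.image fun x =>
          (WithLp.equiv 2 (EuclideanSpace ℝ (Fin d) × EuclideanSpace ℝ (Fin 2))).symm
            (x, -φ x))) → ∃ x ∈ X, ∃ a, (a = φ x ∨ a = -φ x) ∧ ‖a‖ = r ∧
            p = WithLp.toLp 2 (x, a) := by
    intro p hp
    rcases Finset.mem_union.1 hp with h | h
    · obtain ⟨x, hx, rfl⟩ := Finset.mem_image.1 h
      exact ⟨x, hx, φ x, Or.inl rfl, hnorm x hx, rfl⟩
    · obtain ⟨x, hx, rfl⟩ := Finset.mem_image.1 h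
      exact ⟨x, hx, -φ x, Or.inr rfl, by rw [norm_neg, hnorm x hx], rfl⟩
  have hne : ∀ x ∈ X, ∀ z ∈ X, ∀ a c, (a = φ x ∨ a = -φ x) → (c = φ z ∨ c = -φ z) →
      z ≠ x → a ≠ c := by
    rintro x hx z hz a c (rfl | rfl) (rfl | rfl) hzx h
    · exact hzx (hinj x hx z hz h).symm
    · exact hneg x hx z hz h
    · exact hneg z hz x hx h.symm
    · exact hzx (hinj x hx z hz (neg_injective h)).symm
  have hopp : ∀ x, ∀ a b, (a = φ x ∨ a = -φ x) → (b = φ x ∨ b = -φ x) → b ≠ a → b = -a := by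
    rintro x a b (rfl | rfl) (rfl | rfl) h
    · exact absurd rfl h
    · rfl
    · simp
    · exact absurd rfl h
  have hstrict : ∀ a c : EuclideanSpace ℝ (Fin 2), ‖a‖ = r → ‖c‖ = r → a ≠ c →
      0 < ⟪-a - a, c - a⟫ := by
    intro a c ha hc hac
    have h1 : 0 < ‖a - c‖ := norm_pos_iff.2 (sub_ne_zero.2 hac)
    have h2 := norm_sub_sq_real a c
    have h3 : ⟪-a - a, c - a⟫ = 2 * ‖a‖ ^ 2 - 2 * ⟪a, c⟫ := by
      simp only [inner_sub_left, inner_sub_right, inner_neg_left, real_inner_self_eq_norm_sq]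
      ring
    rw [h3]
    rw [ha, hc] at h2
    rw [ha]
    nlinarith [pow_pos h1 2]
  intro p hp q hq w hw hqp hwp hqw
  obtain ⟨x, hx, a, hax, ha, rfl⟩ := key p hp
  obtain ⟨y, hy, b, hby, hb, rfl⟩ := key q hq
  obtain ⟨z, hz, c, hcz, hc, rfl⟩ := key w hw
  have hin : ⟪WithLp.toLp 2 (y, b) - WithLp.toLp 2 (x, a),
      WithLp.toLp 2 (z, c) - WithLp.toLp 2 (x, a)⟫ = ⟪y - x, z - x⟫ + ⟪b - a, c - a⟫ := by
    rw [WithLp.prod_inner_apply]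
    rfl
  rw [hin]
  by_cases hyx : y = x
  · subst hyx
    have hba : b = -a := hopp y a b hax hby (by rintro rfl; exact hqp rfl)
    have hzy : z ≠ y := by
      rintro rfl
      have hca : c = -a := hopp z a c hax hcz (by rintro rfl; exact hwp rfl)
      exact hqw (by rw [hba, hca])
    have := hstrict a c ha hc (hne y hx z hz a c hax hcz hzy)
    rw [hba, sub_self, inner_zero_left, zero_add]
    exact this
  · by_cases hzx : z = x
    · subst hzx
      have hca : c = -a := hopp z a c hax hcz (by rintro rfl; exact hwp rfl)
      have := hstrict a b ha hb (hne z hx y hy a b hax hby hyx)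
      rw [hca, sub_self, inner_zero_right, zero_add, real_inner_comm]
      exact this
    · have h1 := hlow x hx y hy z hz hyx hzx
      have h2 := abs_real_inner_le_norm (b - a) (c - a)
      have h3 : ‖b - a‖ ≤ 2 * r := by linarith [norm_sub_le b a]
      have h4 : ‖c - a‖ ≤ 2 * r := by linarith [norm_sub_le c a]
      have h5 : ‖b - a‖ * ‖c - a‖ ≤ (2 * r) * (2 * r) :=
        mul_le_mul h3 h4 (norm_nonneg _) (by positivity)
      have h6 := neg_abs_le ⟪b - a, c - a⟫
      nlinarith
end
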